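/- Let ℍ denote the hyperbolic upper half-plane with its hyperbolic distance dist, on which SL(2, ℝ) acts by Möbius transformations, and let i ∈ ℍ be the point with complex coordinate √−1. For t, θ ∈ ℝ let A(t) ∈ SL(2, ℝ) be the matrix with rows (e^{t/2}, 0) and (0, e^{−t/2}), and let R(θ) ∈ SL(2, ℝ) be the rotation matrix with rows (cos θ, −sin θ) and (sin θ, cos θ). Then for every ε > 0 there exists C > 1 with the following property: for every subgroup Λ of SL(2, ℝ) and every w ∈ ℍ such that the open hyperbolic balls B(g•w, ε), g ∈ Λ, are pairwise disjoint (for distinct elements g ≠ g' of Λ), and for every g₁ ∈ SL(2, ℝ), writing z = g₁•i, one has in [0, ∞]: C⁻¹·Σ_{g∈Λ} exp(−dist(z, g•w)) ≤ (1/(2π))·∫₀^{2π} Leb({t ∈ [0, ∞) : ∃ g ∈ Λ, dist((g₁·R(θ)·A(t))•i, g•w) < ε}) dθ ≤ C·Σ_{g∈Λ} exp(−dist(z, g•w)), where both sides may be infinite, Leb denotes Lebesgue measure on ℝ, B(u, ε) = {v ∈ ℍ : dist(v, u) < ε}, and the sum over Λ is the unordered sum of nonnegative extended reals. -/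

import Mathlib

open MeasureTheory UpperHalfPlane
open scoped ENNReal

/-- The diagonal one-parameter subgroup `A(t) = diag(e^{t/2}, e^{−t/2})` of `SL(2, ℝ)`. -/
noncomputable def Amat (t : ℝ) : Matrix.SpecialLinearGroup (Fin 2) ℝ :=
  ⟨!![Real.exp (t / 2), 0; 0, Real.exp (-(t / 2))], by
    simp [Matrix.det_fin_two_of, ← Real.exp_add]⟩

/-- The rotation `R(θ) ∈ SO(2) ⊆ SL(2, ℝ)`. -/
noncomputable def Rmat (θ : ℝ) : Matrix.SpecialLinearGroup (Fin 2) ℝ :=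
  ⟨!![Real.cos θ, -Real.sin θ; Real.sin θ, Real.cos θ], by
    rw [Matrix.det_fin_two_of]; ring_nf
    exact Real.cos_sq_add_sin_sq θ⟩

/-!
By the hyperbolic law of cosines, a geodesic ray from `z` whose direction makes an angle `2 * u`
with the direction of `p` meets the ball `B(p, ε)` only if `|sin u|` is at most a constant times
`exp (-dist z p)`; conversely, once `|sin u|` is below a smaller such multiple, the ray spends at
least time `ε / 2` in the ball, and it never spends more than `2 * ε` there. So the expected time
spent in `B(p, ε)` by a ray in a random direction is comparable to `exp (-dist z p)`. For pairwise
disjoint balls these times add up.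
-/

open Real Set Metric
open scoped MatrixGroups

lemma cosh_le_exp {x : ℝ} (hx : 0 ≤ x) : cosh x ≤ exp x := by
  linarith [cosh_add_sinh x, sinh_nonneg_iff.2 hx]

lemma half_exp_le_cosh (x : ℝ) : exp x / 2 ≤ cosh x := by
  linarith [cosh_eq x, exp_pos (-x)]

section PeriodicSets

variable {S : Set ℝ} {T : ℝ}

lemma volume_inter_Ioc_add_eq_of_periodic (hT : 0 < T) (hS : MeasurableSet S)
    (hST : Function.Periodic (· ∈ S) T) (a b : ℝ) :
    volume (S ∩ Ioc a (a + T)) = volume (S ∩ Ioc b (b + T)) := by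
  have hinv (g : AddSubgroup.zmultiples T) (x : ℝ) :
      S.indicator (1 : ℝ → ℝ≥0∞) (g +ᵥ x) = S.indicator 1 x :=
    indicator_const_eq_indicator_const (hST.map_vadd_zmultiples g x).to_iff
  simpa only [lintegral_indicator_one hS, Measure.restrict_apply hS] using
    (isAddFundamentalDomain_Ioc hT a).setLIntegral_eq (isAddFundamentalDomain_Ioc hT b) _ hinv

lemma volume_inter_Ioc_add_add_eq_of_periodic (hT : 0 < T) (hS : MeasurableSet S)
    (hST : Function.Periodic (· ∈ S) T) (a b : ℝ) :
    volume (S ∩ Ioc a (a + T + T)) = 2 * volume (S ∩ Ioc b (b + T)) := by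
  have hdisj : Disjoint (S ∩ Ioc a (a + T)) (S ∩ Ioc (a + T) (a + T + T)) :=
    (Ioc_disjoint_Ioc_of_le le_rfl).mono inter_subset_right inter_subset_right
  rw [← Ioc_union_Ioc_eq_Ioc (b := a + T) (by linarith) (by linarith), inter_union_distrib_left,
    measure_union hdisj (hS.inter measurableSet_Ioc),
    volume_inter_Ioc_add_eq_of_periodic hT hS hST a b,
    volume_inter_Ioc_add_eq_of_periodic hT hS hST (a + T) b, two_mul]

end PeriodicSets

section DoubleSector

/-- The double sector of directions `θ` whose angle `u` with the line of direction `φ` satisfies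
`|sin u| ≤ κ`. -/
def doubleSector (φ κ : ℝ) : Set ℝ := {θ | |sin (θ - φ)| ≤ κ}

variable (φ κ : ℝ)

lemma measurableSet_doubleSector : MeasurableSet (doubleSector φ κ) :=
  measurableSet_le (by fun_prop) measurable_const

lemma volume_doubleSector_inter_Ioc :
    volume (doubleSector φ κ ∩ Ioc 0 (2 * π)) =
      2 * volume (doubleSector φ κ ∩ Ioc (φ - π / 2) (φ - π / 2 + π)) := by
  have hper : Function.Periodic (· ∈ doubleSector φ κ) π := fun θ => by
    simp only [doubleSector, mem_ofPred_eq, add_sub_right_comm, sin_add_pi, abs_neg]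
  rw [← volume_inter_Ioc_add_add_eq_of_periodic pi_pos (measurableSet_doubleSector φ κ) hper 0,
    zero_add, two_mul]

lemma volume_doubleSector_inter_Ioc_le :
    volume (doubleSector φ κ ∩ Ioc 0 (2 * π)) ≤ ENNReal.ofReal (2 * π * κ) := by
  have hsub : doubleSector φ κ ∩ Ioc (φ - π / 2) (φ - π / 2 + π) ⊆ closedBall φ (π / 2 * κ) := by
    rintro θ ⟨hsin, hlo, hhi⟩
    have hjordan : 2 / π * |θ - φ| ≤ |sin (θ - φ)| :=
      mul_abs_le_abs_sin (abs_le.2 ⟨by linarith, by linarith⟩)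
    rw [mem_closedBall, Real.dist_eq]
    calc |θ - φ| = π / 2 * (2 / π * |θ - φ|) := by field_simp
      _ ≤ π / 2 * κ := by gcongr; exact hjordan.trans hsin
  calc volume (doubleSector φ κ ∩ Ioc 0 (2 * π))
      ≤ 2 * volume (closedBall φ (π / 2 * κ)) := by
        rw [volume_doubleSector_inter_Ioc]
        gcongr
    _ = ENNReal.ofReal (2 * π * κ) := by
        rw [Real.volume_closedBall, ← ENNReal.ofReal_ofNat, ← ENNReal.ofReal_mul zero_le_two]
        congr 1
        ring

variable {κ}

lemma le_volume_doubleSector_inter_Ioc (hκ : κ ≤ 1) :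
    ENNReal.ofReal (4 * κ) ≤ volume (doubleSector φ κ ∩ Ioc 0 (2 * π)) := by
  have hsub : ball φ κ ⊆ doubleSector φ κ ∩ Ioc (φ - π / 2) (φ - π / 2 + π) := by
    intro θ hθ
    rw [mem_ball, Real.dist_eq] at hθ
    have hθ' := abs_lt.1 hθ
    have hπ := pi_gt_three
    exact ⟨abs_sin_le_abs.trans hθ.le, by linarith, by linarith⟩
  calc ENNReal.ofReal (4 * κ) = 2 * volume (ball φ κ) := by
        rw [Real.volume_ball, ← ENNReal.ofReal_ofNat 2, ← ENNReal.ofReal_mul zero_le_two]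
        congr 1
        ring
    _ ≤ volume (doubleSector φ κ ∩ Ioc 0 (2 * π)) := by
        rw [volume_doubleSector_inter_Ioc]
        gcongr

end DoubleSector

section GeodesicRay

lemma Rmat_zero : Rmat 0 = 1 := by
  ext i j
  fin_cases i <;> fin_cases j <;> simp [Rmat]

lemma Amat_zero : Amat 0 = 1 := by
  ext i j
  fin_cases i <;> fin_cases j <;> simp [Amat]

lemma Rmat_add (θ φ : ℝ) : Rmat (θ + φ) = Rmat θ * Rmat φ := by
  refine Subtype.ext ?_
  rw [Matrix.SpecialLinearGroup.coe_mul]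
  simp only [Rmat, sin_add, cos_add, Matrix.mul_fin_two]
  ring_nf

lemma Amat_add (s t : ℝ) : Amat (s + t) = Amat s * Amat t := by
  refine Subtype.ext ?_
  rw [Matrix.SpecialLinearGroup.coe_mul]
  simp [Amat, add_div, ← exp_add, add_comm]

lemma Rmat_neg (θ : ℝ) : Rmat (-θ) = (Rmat θ)⁻¹ :=
  eq_inv_of_mul_eq_one_left (by rw [← Rmat_add, neg_add_cancel, Rmat_zero])

lemma Amat_neg (t : ℝ) : Amat (-t) = (Amat t)⁻¹ :=
  eq_inv_of_mul_eq_one_left (by rw [← Amat_add, neg_add_cancel, Amat_zero])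

lemma continuous_Rmat : Continuous Rmat :=
  Continuous.subtype_mk (by fun_prop) _

lemma continuous_Amat : Continuous Amat :=
  Continuous.subtype_mk (by fun_prop) _

/-- The point at time `t` of the geodesic through `g • I` whose direction at time `0` is given by
the rotation parameter `θ`. The tangent vector turns by `2 * θ`, so directions have period `π`. -/
noncomputable def geodesicRay (g : SL(2, ℝ)) (θ t : ℝ) : ℍ := (g * Rmat θ * Amat t) • I

variable (g : SL(2, ℝ))

lemma continuous_geodesicRay : Continuous fun x : ℝ × ℝ => geodesicRay g x.1 x.2 := by
  have := continuous_Rmat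
  have := continuous_Amat
  unfold geodesicRay
  fun_prop

lemma re_smul_I :
    (g • I : ℍ).re = (g 0 0 * g 1 0 + g 0 1 * g 1 1) / (g 1 0 ^ 2 + g 1 1 ^ 2) := by
  rw [← coe_re, coe_specialLinearGroup_apply, Complex.div_re, ← add_div]
  simp [Complex.normSq_apply, ← sq, add_comm]

lemma im_smul_I : (g • I : ℍ).im = 1 / (g 1 0 ^ 2 + g 1 1 ^ 2) := by
  have hdet : g 0 0 * g 1 1 - g 0 1 * g 1 0 = 1 := by rw [← Matrix.det_fin_two, g.det_coe]
  rw [← coe_im, coe_specialLinearGroup_apply, Complex.div_im]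
  simp [Complex.normSq_apply, ← sub_div, hdet, ← sq, add_comm]

lemma cosh_dist_I_smul_I :
    cosh (dist I (g • I)) = (g 0 0 ^ 2 + g 0 1 ^ 2 + g 1 0 ^ 2 + g 1 1 ^ 2) / 2 := by
  have hdet : g 0 0 * g 1 1 - g 0 1 * g 1 0 = 1 := by rw [← Matrix.det_fin_two, g.det_coe]
  have hpos : 0 < g 1 0 ^ 2 + g 1 1 ^ 2 := one_div_pos.1 (im_smul_I g ▸ (g • I).im_pos)
  rw [cosh_dist', re_smul_I, im_smul_I, I_re, I_im]
  field_simp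
  linear_combination (-(g 0 0 * g 1 1 - g 0 1 * g 1 0) - 1) * hdet

lemma coe_Amat_mul_Rmat_mul_Amat (s θ t : ℝ) :
    ((Amat s * Rmat θ * Amat t : SL(2, ℝ)) : Matrix (Fin 2) (Fin 2) ℝ) =
      !![cos θ * exp ((s + t) / 2), -(sin θ * exp ((s - t) / 2));
        sin θ * exp ((t - s) / 2), cos θ * exp (-((s + t) / 2))] := by
  rw [Matrix.SpecialLinearGroup.coe_mul, Matrix.SpecialLinearGroup.coe_mul]
  simp only [Amat, Rmat, Matrix.mul_fin_two, add_div, sub_eq_add_neg, exp_add, neg_add]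
  ring_nf

/-- The hyperbolic law of cosines for the triangle with apex `g • I`, whose apex angle is
`2 * (θ - φ)`. -/
lemma cosh_dist_geodesicRay (θ t φ d : ℝ) :
    cosh (dist (geodesicRay g θ t) (geodesicRay g φ d)) =
      cos (θ - φ) ^ 2 * cosh (t - d) + sin (θ - φ) ^ 2 * cosh (t + d) := by
  have hquot : Amat (-t) * Rmat (-θ + φ) * Amat d =
      (g * Rmat θ * Amat t)⁻¹ * (g * Rmat φ * Amat d) := by
    rw [Rmat_add, Rmat_neg, Amat_neg]
    group
  have hdist : dist (geodesicRay g θ t) (geodesicRay g φ d) =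
      dist I ((Amat (-t) * Rmat (-θ + φ) * Amat d) • I) := by
    rw [hquot, mul_smul _ (g * Rmat φ * Amat d), ← dist_smul (g * Rmat θ * Amat t) I,
      smul_inv_smul, geodesicRay, geodesicRay]
  have hcosh (x : ℝ) : cosh x = (exp (x / 2) ^ 2 + exp (-(x / 2)) ^ 2) / 2 := by
    rw [cosh_eq, ← exp_nat_mul, ← exp_nat_mul]
    ring_nf
  rw [hdist, cosh_dist_I_smul_I, coe_Amat_mul_Rmat_mul_Amat, hcosh, hcosh, neg_add_eq_sub,
    ← neg_sub θ, cos_neg, sin_neg]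
  simp only [neg_mul, neg_neg, sub_neg_eq_add, Matrix.of_apply, Matrix.cons_val',
    Matrix.cons_val_zero, Matrix.cons_val_fin_one, Matrix.cons_val_one, even_two, Even.neg_pow]
  ring_nf

lemma dist_smul_I_geodesicRay (φ d : ℝ) : dist (g • I) (geodesicRay g φ d) = |d| := by
  have horigin : g • I = geodesicRay g 0 0 := by
    simp only [geodesicRay, Rmat_zero, Amat_zero, mul_one]
  have hcosh : cosh (dist (g • I) (geodesicRay g φ d)) = cosh d := by
    rw [horigin, cosh_dist_geodesicRay, zero_sub d, zero_add, cosh_neg, ← add_mul,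
      cos_sq_add_sin_sq, one_mul]
  simpa only [abs_dist] using
    le_antisymm (cosh_le_cosh.1 hcosh.le) (cosh_le_cosh.1 hcosh.ge)

lemma geodesicRay_add_pi_div_two_neg (θ t : ℝ) :
    geodesicRay g (θ + π / 2) (-t) = geodesicRay g θ t := by
  have hcosh := cosh_dist_geodesicRay g (θ + π / 2) (-t) θ t
  rw [add_sub_cancel_left, cos_pi_div_two, sin_pi_div_two, neg_add_cancel, cosh_zero,
    zero_pow two_ne_zero, zero_mul, zero_add, one_pow, one_mul] at hcosh
  by_contra hne
  exact (one_lt_cosh.2 (dist_ne_zero.2 hne)).ne' hcosh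

lemma exists_re_Rmat_smul_eq_zero (p : ℍ) : ∃ φ, (Rmat φ • p).re = 0 := by
  have hcont : Continuous fun φ => (Rmat φ • p).re := by
    have := continuous_Rmat
    have := UpperHalfPlane.continuous_re
    fun_prop
  have hzero : (Rmat 0 • p).re = p.re := by rw [Rmat_zero, one_smul]
  have hquarter : (Rmat (π / 2) • p).re = -(p.re / Complex.normSq p) := by
    rw [← coe_re, coe_specialLinearGroup_apply]
    simp [Rmat, neg_div]
  have hnormSq := Complex.normSq_nonneg (p : ℂ)
  obtain hp | hp := le_total 0 p.re
  · have : (Rmat (π / 2) • p).re ≤ 0 := hquarter ▸ neg_nonpos.2 (div_nonneg hp hnormSq)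
    exact mem_range_of_exists_le_of_exists_ge hcont ⟨_, this⟩ ⟨0, hzero ▸ hp⟩
  · have : 0 ≤ (Rmat (π / 2) • p).re :=
      hquarter ▸ neg_nonneg.2 (div_nonpos_of_nonpos_of_nonneg hp hnormSq)
    exact mem_range_of_exists_le_of_exists_ge hcont ⟨0, hzero ▸ hp⟩ ⟨_, this⟩

lemma Amat_log_im_smul_I_of_re_eq_zero {p : ℍ} (hp : p.re = 0) : Amat (log p.im) • I = p := by
  have hre : (Amat (log p.im) • I).re = p.re := by
    rw [re_smul_I, hp]
    simp [Amat]
  have him : (Amat (log p.im) • I).im = p.im := by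
    rw [im_smul_I]
    simp [Amat, ← exp_nat_mul, ← exp_neg, mul_div_cancel₀, exp_log p.im_pos]
  exact UpperHalfPlane.ext_re_im hre him

lemma exists_geodesicRay_eq (p : ℍ) : ∃ φ d, 0 ≤ d ∧ geodesicRay g φ d = p := by
  obtain ⟨φ, hφ⟩ := exists_re_Rmat_smul_eq_zero (g⁻¹ • p)
  obtain ⟨d, hd⟩ : ∃ d, geodesicRay g (-φ) d = p := by
    refine ⟨log (Rmat φ • g⁻¹ • p).im, ?_⟩
    rw [geodesicRay, mul_smul, mul_smul, Amat_log_im_smul_I_of_re_eq_zero hφ, Rmat_neg,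
      inv_smul_smul, smul_inv_smul]
  obtain hd0 | hd0 := le_total 0 d
  · exact ⟨-φ, d, hd0, hd⟩
  · exact ⟨-φ + π / 2, -d, neg_nonneg.2 hd0, by rw [geodesicRay_add_pi_div_two_neg, hd]⟩

end GeodesicRay

section Visits

variable {g : SL(2, ℝ)} {ε θ t φ d : ℝ}

lemma abs_sub_lt_of_dist_geodesicRay_lt (ht : 0 ≤ t) (hd : 0 ≤ d)
    (h : dist (geodesicRay g θ t) (geodesicRay g φ d) < ε) : |t - d| < ε := by
  have hdist := abs_dist_sub_le (geodesicRay g θ t) (geodesicRay g φ d) (g • I)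
  rw [dist_comm _ (g • I), dist_comm _ (g • I), dist_smul_I_geodesicRay, dist_smul_I_geodesicRay,
    abs_of_nonneg ht, abs_of_nonneg hd] at hdist
  exact hdist.trans_lt h

lemma mem_doubleSector_of_dist_geodesicRay_lt (ht : 0 ≤ t) (hd : 0 ≤ d)
    (h : dist (geodesicRay g θ t) (geodesicRay g φ d) < ε) :
    θ ∈ doubleSector φ (2 * exp ε * exp (-d)) := by
  have hlaw := cosh_dist_geodesicRay g θ t φ d
  have hupper : cosh (dist (geodesicRay g θ t) (geodesicRay g φ d)) ≤ exp ε :=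
    (cosh_le_exp dist_nonneg).trans (exp_le_exp.2 h.le)
  have hlower : exp (2 * d - ε) / 2 ≤ cosh (t + d) := by
    have hclose := (abs_lt.1 (abs_sub_lt_of_dist_geodesicRay_lt ht hd h)).1
    refine (div_le_div_of_nonneg_right (exp_le_exp.2 ?_) zero_le_two).trans (half_exp_le_cosh _)
    linarith
  have hprod : sin (θ - φ) ^ 2 * (exp (2 * d - ε) / 2) ≤ exp ε := by
    have := mul_nonneg (sq_nonneg (cos (θ - φ))) (cosh_pos (t - d)).le
    have := mul_le_mul_of_nonneg_left hlower (sq_nonneg (sin (θ - φ)))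
    linarith
  refine abs_le_of_sq_le_sq (a := sin (θ - φ)) ?_ (by positivity)
  calc sin (θ - φ) ^ 2
      = sin (θ - φ) ^ 2 * (exp (2 * d - ε) / 2) * (2 * exp (ε - 2 * d)) := by
        rw [← neg_sub (2 * d), exp_neg]
        field_simp
    _ ≤ exp ε * (4 * exp (ε - 2 * d)) := by gcongr; norm_num
    _ = (2 * exp ε * exp (-d)) ^ 2 := by
        rw [sub_eq_add_neg, exp_add, neg_mul_eq_mul_neg, two_mul (-d), exp_add]
        ring

lemma dist_geodesicRay_lt_of_mem_doubleSector {η : ℝ} (hε : 0 < ε)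
    (hη : η ^ 2 * exp (ε / 2) ≤ cosh ε - cosh (ε / 2)) (hd : 0 ≤ d)
    (hθ : θ ∈ doubleSector φ (η * exp (-d))) (ht : t ∈ Ico d (d + ε / 2)) :
    dist (geodesicRay g θ t) (geodesicRay g φ d) < ε := by
  obtain ⟨hdt, htd⟩ := ht
  have hcos : cos (θ - φ) ^ 2 * cosh (t - d) < cosh (ε / 2) := by
    refine (mul_le_of_le_one_left (cosh_pos _).le (cos_sq_le_one _)).trans_lt (cosh_lt_cosh.2 ?_)
    rw [abs_of_nonneg (by linarith), abs_of_pos (half_pos hε)]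
    linarith
  have hsin : sin (θ - φ) ^ 2 * cosh (t + d) ≤ η ^ 2 * exp (ε / 2) := by
    calc sin (θ - φ) ^ 2 * cosh (t + d) ≤ (η * exp (-d)) ^ 2 * exp (d + ε / 2 + d) := by
          refine mul_le_mul (sq_le_sq.2 (hθ.trans (le_abs_self _)))
            ((cosh_le_exp (by linarith)).trans (exp_le_exp.2 (by linarith)))
            (cosh_pos _).le (by positivity)
      _ = η ^ 2 * exp (ε / 2) := by
          rw [mul_pow, sq (exp (-d)), mul_assoc, ← exp_add, ← exp_add]
          ring_nf
  have hcosh : cosh (dist (geodesicRay g θ t) (geodesicRay g φ d)) < cosh ε := by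
    rw [cosh_dist_geodesicRay]
    linarith
  simpa only [abs_dist, abs_of_pos hε] using cosh_lt_cosh.1 hcosh

lemma volume_visits_ball_le (hd : 0 ≤ d) :
    volume {t | 0 ≤ t ∧ geodesicRay g θ t ∈ ball (geodesicRay g φ d) ε} ≤
      (doubleSector φ (2 * exp ε * exp (-d))).indicator (fun _ => ENNReal.ofReal (2 * ε)) θ := by
  refine le_indicator_apply (fun _ => ?_) fun hθ => ?_
  · rw [← Real.volume_ball d]
    exact measure_mono fun t ht => abs_sub_lt_of_dist_geodesicRay_lt ht.1 hd ht.2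
  · refine (measure_mono_null (fun t ht => ?_) measure_empty).le
    exact hθ (mem_doubleSector_of_dist_geodesicRay_lt ht.1 hd ht.2)

lemma le_volume_visits_ball {η : ℝ} (hε : 0 < ε)
    (hη : η ^ 2 * exp (ε / 2) ≤ cosh ε - cosh (ε / 2)) (hd : 0 ≤ d) :
    (doubleSector φ (η * exp (-d))).indicator (fun _ => ENNReal.ofReal (ε / 2)) θ ≤
      volume {t | 0 ≤ t ∧ geodesicRay g θ t ∈ ball (geodesicRay g φ d) ε} := by
  refine indicator_apply_le' (fun hθ => ?_) fun _ => zero_le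
  rw [← add_sub_cancel_left d (ε / 2), ← Real.volume_Ico]
  exact measure_mono fun t ht =>
    ⟨hd.trans ht.1, dist_geodesicRay_lt_of_mem_doubleSector hε hη hd hθ ht⟩

end Visits

section GreenMeasure

/-- The Green measure seen from `g • I`: the mass of `U` is the time which the geodesic ray issued
from `g • I` in a uniformly random direction spends in `U`. -/
noncomputable def greenMeasure (g : SL(2, ℝ)) : Measure ℍ :=
  ENNReal.ofReal (1 / (2 * π)) •
    ((volume.restrict (Ioc 0 (2 * π))).prod (volume.restrict (Ici 0))).map
      fun x => geodesicRay g x.1 x.2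

variable (g : SL(2, ℝ)) {ε : ℝ}

lemma greenMeasure_apply {U : Set ℍ} (hU : MeasurableSet U) :
    greenMeasure g U = ENNReal.ofReal (1 / (2 * π)) *
      ∫⁻ θ in Ioc 0 (2 * π), volume {t | 0 ≤ t ∧ geodesicRay g θ t ∈ U} := by
  have hray := (continuous_geodesicRay g).measurable
  rw [greenMeasure, Measure.smul_apply, smul_eq_mul, Measure.map_apply hray hU,
    Measure.prod_apply (hray hU)]
  congr! 3
  rw [Measure.restrict_apply (measurable_prodMk_left (hray hU)), inter_comm]
  rfl

lemma greenMeasure_ball_le (p : ℍ) :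
    greenMeasure g (ball p ε) ≤ ENNReal.ofReal (4 * ε * exp ε * exp (-dist (g • I) p)) := by
  obtain ⟨φ, d, hd, rfl⟩ := exists_geodesicRay_eq g p
  set κ := 2 * exp ε * exp (-d) with hκ
  calc greenMeasure g (ball (geodesicRay g φ d) ε)
      ≤ ENNReal.ofReal (1 / (2 * π)) * ∫⁻ θ in Ioc 0 (2 * π),
          (doubleSector φ κ).indicator (fun _ => ENNReal.ofReal (2 * ε)) θ := by
        rw [greenMeasure_apply g measurableSet_ball]
        gcongr
        exact volume_visits_ball_le hd
    _ = ENNReal.ofReal (1 / (2 * π)) *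
          (ENNReal.ofReal (2 * ε) * volume (doubleSector φ κ ∩ Ioc 0 (2 * π))) := by
        rw [lintegral_indicator_const (measurableSet_doubleSector φ κ),
          Measure.restrict_apply (measurableSet_doubleSector φ κ)]
    _ ≤ ENNReal.ofReal (1 / (2 * π)) *
          (ENNReal.ofReal (2 * ε) * ENNReal.ofReal (2 * π * κ)) := by
        gcongr
        exact volume_doubleSector_inter_Ioc_le φ κ
    _ = ENNReal.ofReal (4 * ε * exp ε * exp (-dist (g • I) (geodesicRay g φ d))) := by
        rw [dist_smul_I_geodesicRay, abs_of_nonneg hd, ← ENNReal.ofReal_mul' (by positivity),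
          ← ENNReal.ofReal_mul (by positivity)]
        congr 1
        rw [hκ]
        field_simp
        ring

lemma le_greenMeasure_ball {η : ℝ} (hε : 0 < ε) (hη₁ : η ≤ 1)
    (hη : η ^ 2 * exp (ε / 2) ≤ cosh ε - cosh (ε / 2)) (p : ℍ) :
    ENNReal.ofReal (ε * η / π * exp (-dist (g • I) p)) ≤ greenMeasure g (ball p ε) := by
  obtain ⟨φ, d, hd, rfl⟩ := exists_geodesicRay_eq g p
  set κ := η * exp (-d) with hκ
  have hκ₁ : κ ≤ 1 :=
    (mul_le_of_le_one_left (exp_pos _).le hη₁).trans (exp_le_one_iff.2 (neg_nonpos.2 hd))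
  calc ENNReal.ofReal (ε * η / π * exp (-dist (g • I) (geodesicRay g φ d)))
      = ENNReal.ofReal (1 / (2 * π)) *
          (ENNReal.ofReal (ε / 2) * ENNReal.ofReal (4 * κ)) := by
        rw [dist_smul_I_geodesicRay, abs_of_nonneg hd, ← ENNReal.ofReal_mul (by positivity),
          ← ENNReal.ofReal_mul (by positivity)]
        congr 1
        rw [hκ]
        field_simp
        ring
    _ ≤ ENNReal.ofReal (1 / (2 * π)) *
          (ENNReal.ofReal (ε / 2) * volume (doubleSector φ κ ∩ Ioc 0 (2 * π))) := by
        gcongr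
        exact le_volume_doubleSector_inter_Ioc φ hκ₁
    _ = ENNReal.ofReal (1 / (2 * π)) * ∫⁻ θ in Ioc 0 (2 * π),
          (doubleSector φ κ).indicator (fun _ => ENNReal.ofReal (ε / 2)) θ := by
        rw [lintegral_indicator_const (measurableSet_doubleSector φ κ),
          Measure.restrict_apply (measurableSet_doubleSector φ κ)]
    _ ≤ greenMeasure g (ball (geodesicRay g φ d) ε) := by
        rw [greenMeasure_apply g measurableSet_ball]
        gcongr
        exact le_volume_visits_ball hε hη hd

lemma exists_le_greenMeasure_ball (hε : 0 < ε) : ∃ c > 0, ∀ (g : SL(2, ℝ)) (p : ℍ),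
    ENNReal.ofReal (c * exp (-dist (g • I) p)) ≤ greenMeasure g (ball p ε) := by
  have hgap : 0 < cosh ε - cosh (ε / 2) :=
    sub_pos.2 (cosh_lt_cosh.2 (by rw [abs_of_pos hε, abs_of_pos (half_pos hε)]; linarith))
  set η := min 1 ((cosh ε - cosh (ε / 2)) / exp (ε / 2))
  have hη_pos : 0 < η := by positivity
  have hη : η ^ 2 * exp (ε / 2) ≤ cosh ε - cosh (ε / 2) := by
    refine (le_div_iff₀ (exp_pos _)).1 ?_
    exact (pow_le_of_le_one hη_pos.le (min_le_left _ _) two_ne_zero).trans (min_le_right _ _)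
  exact ⟨ε * η / π, by positivity, fun g => le_greenMeasure_ball g hε (min_le_left _ _) hη⟩

end GreenMeasure

theorem stmt10_general {ε : ℝ} (hε : 0 < ε) :
    ∃ C : ℝ, 1 < C ∧ ∀ {ι : Type*} (p : ι → ℍ),
      (Pairwise fun i j => Disjoint (ball (p i) ε) (ball (p j) ε)) → ∀ g : SL(2, ℝ),
        (ENNReal.ofReal C)⁻¹ * ∑' i, ENNReal.ofReal (exp (-dist (g • I) (p i))) ≤
            greenMeasure g (⋃ i, ball (p i) ε) ∧
          greenMeasure g (⋃ i, ball (p i) ε) ≤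
            ENNReal.ofReal C * ∑' i, ENNReal.ofReal (exp (-dist (g • I) (p i))) := by
  obtain ⟨c, hc, hlower⟩ := exists_le_greenMeasure_ball hε
  set C := max 2 (max c⁻¹ (4 * ε * exp ε))
  have hC_pos : 0 < C := by positivity
  have hcC : C⁻¹ ≤ c := inv_le_of_inv_le₀ hc ((le_max_left _ _).trans (le_max_right _ _))
  have hεC : 4 * ε * exp ε ≤ C := (le_max_right _ _).trans (le_max_right _ _)
  refine ⟨C, one_lt_two.trans_le (le_max_left _ _), fun {ι} p hdisj g => ?_⟩
  have : Countable ι :=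
    hdisj.countable_of_isOpen_disjoint (fun _ => isOpen_ball) fun _ => nonempty_ball.2 hε
  rw [measure_iUnion hdisj fun _ => measurableSet_ball, ← ENNReal.tsum_mul_left,
    ← ENNReal.tsum_mul_left]
  refine ⟨ENNReal.tsum_le_tsum fun i => ?_, ENNReal.tsum_le_tsum fun i => ?_⟩
  · refine le_trans ?_ (hlower g (p i))
    rw [← ENNReal.ofReal_inv_of_pos hC_pos, ← ENNReal.ofReal_mul (by positivity)]
    gcongr
  · refine (greenMeasure_ball_le g (p i)).trans ?_
    rw [← ENNReal.ofReal_mul hC_pos.le]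
    gcongr

/-- Lemma A.2 for `G = SL(2, ℝ)`: if the balls `B(g•w, ε)`, `g ∈ Λ`, are pairwise disjoint,
then the `K`-average of the Green function of the geodesic flow on `Λ\ℍ` is comparable to the
Poincaré series `Σ_{g∈Λ} e^{−dist(z, g•w)}` at the critical exponent `δ_G = 1`. -/
theorem stmt10 (ε : ℝ) (hε : 0 < ε) :
    ∃ C : ℝ, 1 < C ∧
      ∀ (Λ : Subgroup (Matrix.SpecialLinearGroup (Fin 2) ℝ)) (w : UpperHalfPlane),
        (∀ g ∈ Λ, ∀ g' ∈ Λ, g ≠ g' →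
          Disjoint (Metric.ball (g • w) ε) (Metric.ball (g' • w) ε)) →
        ∀ g₁ : Matrix.SpecialLinearGroup (Fin 2) ℝ,
          (ENNReal.ofReal C)⁻¹ *
              (∑' g : Λ, ENNReal.ofReal
                (Real.exp (-dist (g₁ • UpperHalfPlane.I) ((g : Matrix.SpecialLinearGroup (Fin 2) ℝ) • w)))) ≤
            ENNReal.ofReal (1 / (2 * Real.pi)) *
              (∫⁻ θ in Set.Ioc (0 : ℝ) (2 * Real.pi),
                volume {t : ℝ | 0 ≤ t ∧ ∃ g ∈ Λ,
                  dist ((g₁ * Rmat θ * Amat t) • UpperHalfPlane.I) (g • w) < ε}) ∧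
          ENNReal.ofReal (1 / (2 * Real.pi)) *
              (∫⁻ θ in Set.Ioc (0 : ℝ) (2 * Real.pi),
                volume {t : ℝ | 0 ≤ t ∧ ∃ g ∈ Λ,
                  dist ((g₁ * Rmat θ * Amat t) • UpperHalfPlane.I) (g • w) < ε}) ≤
            ENNReal.ofReal C *
              (∑' g : Λ, ENNReal.ofReal
                (Real.exp (-dist (g₁ • UpperHalfPlane.I) ((g : Matrix.SpecialLinearGroup (Fin 2) ℝ) • w)))) := by
  obtain ⟨C, hC, hbounds⟩ := stmt10_general hε
  refine ⟨C, hC, fun Λ w hdisj g₁ => ?_⟩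
  have h := hbounds (fun g : Λ => (g : SL(2, ℝ)) • w)
    (fun g g' hgg' => hdisj g g.2 g' g'.2 (Subtype.coe_injective.ne hgg')) g₁
  have hmeas : MeasurableSet (⋃ g : Λ, ball ((g : SL(2, ℝ)) • w) ε) :=
    (isOpen_iUnion fun _ => isOpen_ball).measurableSet
  simpa [greenMeasure_apply _ hmeas, geodesicRay] using h
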